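/- arXiv:1108.2558 — 4 statements merged into one kernel-verified Lean document; each statement's English description precedes it below -/
import Mathlib

section
/- Let u : ℝⁿ → ℝ be continuous and define ũ : ℝ × ℝⁿ → ℝ by ũ(t,x) = u(x) for all (t,x). Then ũ is a viscosity sub-solution of the parabolic PDE ∂u/∂t + 𝓛u(t,x) + g(u(t,x), u_x(t,x)σ(x)) = 0 on ℝ × ℝⁿ if and only if u is a viscosity sub-solution of the elliptic PDE 𝓛u(x) + g(u(x), u_x(x)σ(x)) = 0 on ℝⁿ. -/
open MeasureTheory Matrix Finset

attribute [local instance] Matrix.frobeniusNormedAddCommGroup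

noncomputable section

/-- `ℝⁿ` as Euclidean space. -/
abbrev En (n : ℕ) := EuclideanSpace ℝ (Fin n)

/-- the `i`-th standard basis vector of `ℝⁿ`. -/
def ee (n : ℕ) (i : Fin n) : En n := EuclideanSpace.single i 1

/-- The partial derivative `∂φ/∂xᵢ (x)`. -/
def pd {n : ℕ} (φ : En n → ℝ) (i : Fin n) (x : En n) : ℝ :=
  fderiv ℝ φ x (ee n i)

/-- The second partial derivative `∂²φ/∂xᵢ∂xⱼ (x)`. -/
def pd2 {n : ℕ} (φ : En n → ℝ) (i j : Fin n) (x : En n) : ℝ :=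
  fderiv ℝ (fun y => pd φ j y) x (ee n i)

/-- The elliptic operator
`𝓛φ(x) = Σᵢ bᵢ(x) ∂φ/∂xᵢ(x) + (1/2) Σ_{i,j} (σ(x)σ(x)ᵀ)_{ij} ∂²φ/∂xᵢ∂xⱼ(x)`. -/
def Lop {n : ℕ} (b : En n → En n) (σ : En n → Matrix (Fin n) (Fin n) ℝ)
    (φ : En n → ℝ) (x : En n) : ℝ :=
  ∑ i, b x i * pd φ i x
    + (1 / 2) * ∑ i, ∑ j, (σ x * (σ x)ᵀ) i j * pd2 φ i j x

/-- The spatial gradient of `φ` at `x`, viewed as a row vector, multiplied by the matrix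
`σ(x)`; this is `φ_x(x) σ(x) ∈ ℝⁿ`. -/
def gradMul {n : ℕ} (σ : En n → Matrix (Fin n) (Fin n) ℝ) (φ : En n → ℝ) (x : En n) : En n :=
  (EuclideanSpace.equiv (Fin n) ℝ).symm (fun j => ∑ i, pd φ i x * σ x i j)

/-- `φ : ℝ × ℝⁿ → ℝ` is of class `C^{1,2}`: it is continuous, the time derivative `∂φ/∂t`
exists everywhere and is continuous, and the first and second spatial derivatives exist
everywhere and are continuous. -/
def C12 {n : ℕ} (φ : ℝ × En n → ℝ) : Prop :=
  Continuous φ ∧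
  (∀ p : ℝ × En n, DifferentiableAt ℝ (fun s => φ (s, p.2)) p.1) ∧
  Continuous (fun p : ℝ × En n => deriv (fun s => φ (s, p.2)) p.1) ∧
  (∀ p : ℝ × En n, DifferentiableAt ℝ (fun y => φ (p.1, y)) p.2) ∧
  Continuous (fun p : ℝ × En n => fderiv ℝ (fun y => φ (p.1, y)) p.2) ∧
  (∀ p : ℝ × En n, DifferentiableAt ℝ (fun y => fderiv ℝ (fun z => φ (p.1, z)) y) p.2) ∧
  Continuous (fun p : ℝ × En n => fderiv ℝ (fun y => fderiv ℝ (fun z => φ (p.1, z)) y) p.2)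

/-- `v : ℝ × ℝⁿ → ℝ` is a viscosity super-solution of the parabolic PDE
`∂u/∂t + 𝓛u + g(u, u_x σ) = 0` on `ℝ × ℝⁿ`. -/
def ParabolicSuperSol {n : ℕ} (g : ℝ × En n → ℝ) (b : En n → En n)
    (σ : En n → Matrix (Fin n) (Fin n) ℝ) (v : ℝ × En n → ℝ) : Prop :=
  ∀ (t : ℝ) (x : En n) (φ : ℝ × En n → ℝ), C12 φ → φ (t, x) = v (t, x) →
    (∀ p : ℝ × En n, φ p ≤ v p) →
    deriv (fun s => φ (s, x)) t + Lop b σ (fun y => φ (t, y)) x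
      + g (φ (t, x), gradMul σ (fun y => φ (t, y)) x) ≤ 0

/-- `v : ℝ × ℝⁿ → ℝ` is a viscosity sub-solution of the parabolic PDE
`∂u/∂t + 𝓛u + g(u, u_x σ) = 0` on `ℝ × ℝⁿ`. -/
def ParabolicSubSol {n : ℕ} (g : ℝ × En n → ℝ) (b : En n → En n)
    (σ : En n → Matrix (Fin n) (Fin n) ℝ) (v : ℝ × En n → ℝ) : Prop :=
  ∀ (t : ℝ) (x : En n) (φ : ℝ × En n → ℝ), C12 φ → φ (t, x) = v (t, x) →
    (∀ p : ℝ × En n, v p ≤ φ p) →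
    0 ≤ deriv (fun s => φ (s, x)) t + Lop b σ (fun y => φ (t, y)) x
      + g (φ (t, x), gradMul σ (fun y => φ (t, y)) x)

/-- `w : ℝⁿ → ℝ` is a viscosity super-solution of the elliptic PDE
`𝓛u + g(u, u_x σ) = 0` on `ℝⁿ`. -/
def EllipticSuperSol {n : ℕ} (g : ℝ × En n → ℝ) (b : En n → En n)
    (σ : En n → Matrix (Fin n) (Fin n) ℝ) (w : En n → ℝ) : Prop :=
  ∀ (x : En n) (φ : En n → ℝ), ContDiff ℝ 2 φ → φ x = w x → (∀ y, φ y ≤ w y) →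
    Lop b σ φ x + g (φ x, gradMul σ φ x) ≤ 0

/-- `w : ℝⁿ → ℝ` is a viscosity sub-solution of the elliptic PDE
`𝓛u + g(u, u_x σ) = 0` on `ℝⁿ`. -/
def EllipticSubSol {n : ℕ} (g : ℝ × En n → ℝ) (b : En n → En n)
    (σ : En n → Matrix (Fin n) (Fin n) ℝ) (w : En n → ℝ) : Prop :=
  ∀ (x : En n) (φ : En n → ℝ), ContDiff ℝ 2 φ → φ x = w x → (∀ y, w y ≤ φ y) →
    0 ≤ Lop b σ φ x + g (φ x, gradMul σ φ x)

end


/-- **Lemma 2, sub-solution case.** `ũ(t,x) := u(x)` is a viscosity sub-solution of the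
parabolic PDE `∂u/∂t + 𝓛u + g(u, u_x σ) = 0` if and only if `u` is a viscosity
sub-solution of the elliptic PDE `𝓛u + g(u, u_x σ) = 0`. -/
theorem parabolic_subSol_iff_elliptic_subSol {n : ℕ}
    (b : En n → En n) (σ : En n → Matrix (Fin n) (Fin n) ℝ)
    (hbσ : ∃ C > 0, ∀ x₁ x₂ : En n, ‖b x₁ - b x₂‖ + ‖σ x₁ - σ x₂‖ ≤ C * ‖x₁ - x₂‖)
    (g : ℝ × En n → ℝ) (hg0 : ∀ y : ℝ, g (y, 0) = 0)
    (hgLip : ∃ C > 0, ∀ (y₁ y₂ : ℝ) (z₁ z₂ : En n),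
      |g (y₁, z₁) - g (y₂, z₂)| ≤ C * (|y₁ - y₂| + ‖z₁ - z₂‖))
    (u : En n → ℝ) (hu : Continuous u) :
    ParabolicSubSol g b σ (fun p => u p.2) ↔ EllipticSubSol g b σ u := by
  constructor
  · intro h x φ hφ hx hle
    have hd : Differentiable ℝ φ := hφ.differentiable (by norm_num)
    have h1 : ContDiff ℝ 1 (fderiv ℝ φ) := hφ.fderiv_right (by norm_num)
    have hd1 : Differentiable ℝ (fderiv ℝ φ) := h1.differentiable (by norm_num)
    have hc2 : Continuous (fderiv ℝ (fderiv ℝ φ)) := h1.continuous_fderiv (by norm_num)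
    have key := h 0 x (fun p => φ p.2)
      ⟨hφ.continuous.comp continuous_snd, fun p => differentiableAt_const (φ p.2),
        by simpa using continuous_const, fun p => hd p.2,
        h1.continuous.comp continuous_snd, fun p => hd1 p.2, hc2.comp continuous_snd⟩
      hx (fun p => hle p.2)
    simpa using key
  · intro h t x φ hφ hx hle
    obtain ⟨-, -, -, hd, -, hd1, hc2⟩ := hφ
    have hmin : IsLocalMin (fun s => φ (s, x)) t := by
      refine Filter.Eventually.of_forall fun s => ?_
      have := hle (s, x)
      simp only at this hx ⊢
      rw [hx]; exact this
    have h1 : ContDiff ℝ 1 (fderiv ℝ (fun y => φ (t, y))) :=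
      contDiff_one_iff_fderiv.2 ⟨fun y => hd1 (t, y),
        hc2.comp (Continuous.prodMk_right t)⟩
    have h2 : ContDiff ℝ 2 (fun y => φ (t, y)) := by
      rw [show (2 : WithTop ℕ∞) = 1 + 1 by norm_num, contDiff_succ_iff_fderiv]
      exact ⟨fun y => hd (t, y), by simp, h1⟩
    rw [hmin.deriv_eq_zero, zero_add]
    exact h x (fun y => φ (t, y)) h2 hx (fun y => hle (t, y))
end

section
/- Let u : ℝⁿ → ℝ be continuous and define ũ : ℝ × ℝⁿ → ℝ by ũ(t,x) = u(x) for all (t,x). Then ũ is a viscosity solution of the parabolic PDE ∂u/∂t + 𝓛u(t,x) + g(u(t,x), u_x(t,x)σ(x)) = 0 on ℝ × ℝⁿ if and only if u is a viscosity solution of the elliptic PDE 𝓛u(x) + g(u(x), u_x(x)σ(x)) = 0 on ℝⁿ. -/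
open MeasureTheory Matrix Finset

attribute [local instance] Matrix.frobeniusNormedAddCommGroup

theorem C12.slice {n : ℕ} {φ : ℝ × En n → ℝ} (h : C12 φ) (t : ℝ) :
    ContDiff ℝ 2 (fun y => φ (t, y)) := by
  obtain ⟨-, -, -, h4, -, h6, h7⟩ := h
  have hc : Continuous (fun y : En n => ((t, y) : ℝ × En n)) := by fun_prop
  rw [show (2 : WithTop ℕ∞) = 1 + 1 by norm_num, contDiff_succ_iff_fderiv]
  refine ⟨fun y => h4 (t, y), by simp, ?_⟩
  rw [contDiff_one_iff_fderiv]
  exact ⟨fun y => h6 (t, y), h7.comp hc⟩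

theorem C12.of_contDiff {n : ℕ} {φ : En n → ℝ} (h : ContDiff ℝ 2 φ) :
    C12 (fun p : ℝ × En n => φ p.2) := by
  have h0 := h
  rw [show (2 : WithTop ℕ∞) = 1 + 1 by norm_num, contDiff_succ_iff_fderiv] at h
  obtain ⟨h1, -, h2⟩ := h
  rw [contDiff_one_iff_fderiv] at h2
  refine ⟨h0.continuous.comp continuous_snd, fun p => by simp, by simpa using continuous_const,
    fun p => h1 _, ?_, fun p => h2.1 _, h2.2.comp continuous_snd⟩
  exact h2.1.continuous.comp continuous_snd

/-- **Lemma 2, full statement.** `ũ(t,x) := u(x)` is a viscosity solution of the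
parabolic PDE `∂u/∂t + 𝓛u + g(u, u_x σ) = 0` if and only if `u` is a viscosity
solution of the elliptic PDE `𝓛u + g(u, u_x σ) = 0`. -/
theorem parabolic_sol_iff_elliptic_sol {n : ℕ}
    (b : En n → En n) (σ : En n → Matrix (Fin n) (Fin n) ℝ)
    (hbσ : ∃ C > 0, ∀ x₁ x₂ : En n, ‖b x₁ - b x₂‖ + ‖σ x₁ - σ x₂‖ ≤ C * ‖x₁ - x₂‖)
    (g : ℝ × En n → ℝ) (hg0 : ∀ y : ℝ, g (y, 0) = 0)
    (hgLip : ∃ C > 0, ∀ (y₁ y₂ : ℝ) (z₁ z₂ : En n),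
      |g (y₁, z₁) - g (y₂, z₂)| ≤ C * (|y₁ - y₂| + ‖z₁ - z₂‖))
    (u : En n → ℝ) (hu : Continuous u) :
    (ParabolicSuperSol g b σ (fun p => u p.2) ∧ ParabolicSubSol g b σ (fun p => u p.2)) ↔
      (EllipticSuperSol g b σ u ∧ EllipticSubSol g b σ u) := by
  constructor
  · rintro ⟨h1, h2⟩
    constructor
    · intro x φ hφ he hle
      simpa using h1 0 x (fun p => φ p.2) (C12.of_contDiff hφ) he (fun p => hle p.2)
    · intro x φ hφ he hle
      simpa using h2 0 x (fun p => φ p.2) (C12.of_contDiff hφ) he (fun p => hle p.2)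
  · rintro ⟨h1, h2⟩
    constructor
    · intro t x φ hφ he hle
      have hd : deriv (fun s => φ (s, x)) t = 0 := by
        apply IsLocalMax.deriv_eq_zero
        exact Filter.Eventually.of_forall fun s => (hle (s, x)).trans he.ge
      rw [hd, zero_add]
      exact h1 x (fun y => φ (t, y)) (hφ.slice t) he (fun y => hle (t, y))
    · intro t x φ hφ he hle
      have hd : deriv (fun s => φ (s, x)) t = 0 := by
        apply IsLocalMin.deriv_eq_zero
        exact Filter.Eventually.of_forall fun s => he.le.trans (hle (s, x))
      rw [hd, zero_add]
      exact h2 x (fun y => φ (t, y)) (hφ.slice t) he (fun y => hle (t, y))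
end

section
/- Let u : ℝⁿ → ℝ be continuous and of polynomial growth (there exist C > 0 and k ∈ ℕ with |u(y)| ≤ C(1 + |y|^k) for all y). Suppose that for every x ∈ ℝⁿ there is a Brownian motion (B^x_t)_{t≥0} started at x such that (u(B^x_t))_{t≥0} is a martingale with respect to the natural filtration σ(B^x_s : s ≤ t). Then u is infinitely differentiable and harmonic on ℝⁿ, i.e. Δu(y) = Σᵢ ∂²u/∂yᵢ²(y) = 0 for all y ∈ ℝⁿ. -/
open MeasureTheory ProbabilityTheory Finset
open scoped NNReal

noncomputable section

/-- The Laplacian `Δu(y) = Σᵢ ∂²u/∂yᵢ²(y)`. -/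
def laplacian {n : ℕ} (u : En n → ℝ) (y : En n) : ℝ :=
  ∑ i, fderiv ℝ (fun z => fderiv ℝ u z (ee n i)) y (ee n i)

/-- An `ℝⁿ`-valued process `(B_t)_{t ≥ 0}` on a probability space `(Ω, 𝓕, P)` is a
Brownian motion started at `x ∈ ℝⁿ` if `B₀ = x` a.s., a.e. sample path is continuous,
and for all `0 ≤ s ≤ t` the increment `B_t − B_s` is independent of `σ(B_r : r ≤ s)`
and its `n` coordinates are independent real Gaussians with mean `0` and variance `t − s`. -/
structure IsBrownianMotion {n : ℕ} {Ω : Type*} [MeasurableSpace Ω] (P : Measure Ω)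
    (x : En n) (B : ℝ≥0 → Ω → En n) : Prop where
  stronglyMeasurable : ∀ t, StronglyMeasurable (B t)
  start : ∀ᵐ ω ∂P, B 0 ω = x
  path_continuous : ∀ᵐ ω ∂P, Continuous fun t => B t ω
  indep_increments : ∀ s t : ℝ≥0, s ≤ t →
    ProbabilityTheory.Indep
      (MeasurableSpace.comap (fun ω => B t ω - B s ω)
        (inferInstance : MeasurableSpace (En n)))
      (⨆ r ∈ Set.Iic s, MeasurableSpace.comap (B r)
        (inferInstance : MeasurableSpace (En n))) P
  gaussian_increments : ∀ s t : ℝ≥0, s ≤ t →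
    Measure.map (fun ω => fun i : Fin n => B t ω i - B s ω i) P
      = Measure.pi (fun _ : Fin n => gaussianReal 0 (t - s))

/-- The Gaussian probability measure `N(x, t·Id)` on `ℝⁿ` with mean `x` and covariance
matrix `t·Id`, i.e. the product of `n` one-dimensional Gaussian measures with means `xᵢ`
and common variance `t`. -/
def gaussN {n : ℕ} (x : En n) (t : ℝ≥0) : Measure (En n) :=
  (Measure.pi fun i : Fin n => gaussianReal (x i) t).map
    ⇑(EuclideanSpace.equiv (Fin n) ℝ).symm

end



open Real in
lemma aux_pi_gauss (n : ℕ) (v : ℝ≥0) (hv : v ≠ 0) :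
    Measure.pi (fun _ : Fin n => gaussianReal 0 v) =
      (volume : Measure (Fin n → ℝ)).withDensity
        (fun y => ENNReal.ofReal (∏ i, gaussianPDFReal 0 v (y i))) := by
  refine Measure.pi_eq (μ := fun _ : Fin n => gaussianReal 0 v) (fun s hs => ?_)
  rw [withDensity_apply _ (MeasurableSet.univ_pi hs), ← lintegral_indicator (MeasurableSet.univ_pi hs)]
  have h1 : ∀ y : Fin n → ℝ, (Set.univ.pi s).indicator
      (fun y => ENNReal.ofReal (∏ i, gaussianPDFReal 0 v (y i))) y =
      ENNReal.ofReal (∏ i, (s i).indicator (gaussianPDFReal 0 v) (y i)) := by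
    intro y
    by_cases hy : y ∈ Set.univ.pi s
    · rw [Set.indicator_of_mem hy]
      congr 1
      refine Finset.prod_congr rfl fun i _ => ?_
      rw [Set.indicator_of_mem (hy i (Set.mem_univ i))]
    · rw [Set.indicator_of_notMem hy]
      simp only [Set.mem_pi, Set.mem_univ, true_imp_iff, not_forall] at hy
      obtain ⟨i, hi⟩ := hy
      rw [Finset.prod_eq_zero (Finset.mem_univ i) (Set.indicator_of_notMem hi _)]
      simp
  have hnn : ∀ i (z : ℝ), 0 ≤ (s i).indicator (gaussianPDFReal 0 v) z := fun i z =>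
    Set.indicator_nonneg (fun _ _ => gaussianPDFReal_nonneg _ _ _) _
  simp_rw [h1]
  rw [← ofReal_integral_eq_lintegral_ofReal]
  · rw [integral_fintype_prod_volume_eq_prod (fun i => (s i).indicator (gaussianPDFReal 0 v)),
      ENNReal.ofReal_prod_of_nonneg (fun i _ => integral_nonneg (hnn i))]
    refine Finset.prod_congr rfl fun i _ => ?_
    rw [gaussianReal_apply_eq_integral _ hv, integral_indicator (hs i)]
  · exact Integrable.fintype_prod (fun i => (integrable_gaussianPDFReal 0 v).indicator (hs i))
  · exact Filter.Eventually.of_forall fun y => Finset.prod_nonneg fun i _ => hnn i _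

lemma aux_mart {n : ℕ} (u : En n → ℝ) (hu : Continuous u) (x : En n) (t : ℝ≥0)
    {Ω : Type} [MeasurableSpace Ω] (P : Measure Ω) [IsProbabilityMeasure P]
    (B : ℝ≥0 → Ω → En n) (hB : IsBrownianMotion P x B)
    (hM : Martingale (fun t ω => u (B t ω)) (Filtration.natural B hB.stronglyMeasurable) P) :
    Integrable (fun z : Fin n → ℝ => u (x + WithLp.toLp 2 z) - u x)
        (Measure.pi (fun _ : Fin n => gaussianReal 0 t)) ∧
      ∫ z : Fin n → ℝ, (u (x + WithLp.toLp 2 z) - u x)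
        ∂(Measure.pi (fun _ : Fin n => gaussianReal 0 t)) = 0 := by
  have hg := hB.gaussian_increments 0 t (zero_le)
  rw [tsub_zero] at hg
  have hm : Measurable (fun ω => fun i : Fin n => B t ω i - B 0 ω i) := by
    have h1 := (hB.stronglyMeasurable t).measurable
    have h2 := (hB.stronglyMeasurable 0).measurable
    fun_prop
  have hc : Continuous (fun z : Fin n → ℝ => u (x + WithLp.toLp 2 z) - u x) := by fun_prop
  have hae : (fun ω => u (B t ω) - u x) =ᵐ[P]
      (fun ω => (fun z : Fin n → ℝ => u (x + WithLp.toLp 2 z) - u x)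
        (fun i : Fin n => B t ω i - B 0 ω i)) := by
    filter_upwards [hB.start] with ω hω
    have : x + WithLp.toLp 2 (fun i : Fin n => B t ω i - B 0 ω i) = B t ω := by
      ext i; simp [hω]
    simp only [this]
  have hint : Integrable (fun ω => u (B t ω) - u x) P :=
    (hM.integrable t).sub (integrable_const _)
  rw [← hg]
  refine ⟨?_, ?_⟩
  · rw [integrable_map_measure hc.aestronglyMeasurable hm.aemeasurable]
    exact hint.congr hae
  · rw [integral_map hm.aemeasurable hc.aestronglyMeasurable, ← integral_congr_ae hae,
      integral_sub (hM.integrable t) (integrable_const _)]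
    have h1 := hM.setIntegral_eq (zero_le (a := t)) (s := Set.univ) MeasurableSet.univ
    simp only [Measure.restrict_univ] at h1
    have h2 : ∫ ω, u (B 0 ω) ∂P = ∫ ω, u x ∂P := integral_congr_ae (by
      filter_upwards [hB.start] with ω hω
      rw [hω])
    rw [← h1, h2, sub_self]

def GH {n : ℕ} (u : En n → ℝ) : Prop := ∀ (x : En n) (s : ℝ), 0 < s →
  Integrable (fun y : En n => (u (x + y) - u x) * Real.exp (-(s * ‖y‖ ^ 2))) ∧
  ∫ y : En n, (u (x + y) - u x) * Real.exp (-(s * ‖y‖ ^ 2)) = 0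

lemma aux_GH {n : ℕ} (u : En n → ℝ) 
    (h : ∀ (x : En n) (t : ℝ≥0), Integrable (fun z : Fin n → ℝ => u (x + WithLp.toLp 2 z) - u x)
        (Measure.pi (fun _ : Fin n => gaussianReal 0 t)) ∧
      ∫ z : Fin n → ℝ, (u (x + WithLp.toLp 2 z) - u x)
        ∂(Measure.pi (fun _ : Fin n => gaussianReal 0 t)) = 0) : GH u := by
  intro x s hs
  let t : ℝ≥0 := ⟨1 / (2 * s), by positivity⟩
  have htc : (t : ℝ) = 1 / (2 * s) := rfl
  have ht : t ≠ 0 := by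
    intro h0
    have : (t : ℝ) = 0 := by rw [h0]; rfl
    rw [htc] at this
    have : 0 < 1 / (2 * s) := by positivity
    linarith
  obtain ⟨h1, h2⟩ := h x t
  set K : ℝ := ((√(2 * Real.pi * t))⁻¹) ^ n with hK
  have hKpos : 0 < K := by
    have : 0 < (t : ℝ) := by rw [htc]; positivity
    positivity
  have hd : ∀ y : Fin n → ℝ, ∏ i, gaussianPDFReal 0 t (y i) =
      K * Real.exp (-(s * ‖(WithLp.toLp 2 y : En n)‖ ^ 2)) := by
    intro y
    simp only [gaussianPDFReal_def]
    rw [Finset.prod_mul_distrib, Finset.prod_const, ← Real.exp_sum, EuclideanSpace.norm_sq_eq]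
    simp only [Finset.card_univ, Fintype.card_fin]
    rw [hK]
    congr 2
    rw [Finset.mul_sum, ← Finset.sum_neg_distrib]
    refine Finset.sum_congr rfl fun i _ => ?_
    rw [htc]
    simp
    field_simp
  rw [aux_pi_gauss n t ht] at h1 h2
  simp_rw [hd] at h1 h2
  have hmeas : Measurable fun y : Fin n → ℝ =>
      ENNReal.ofReal (K * Real.exp (-(s * ‖(WithLp.toLp 2 y : En n)‖ ^ 2))) := by fun_prop
  have hlt : ∀ᵐ y : Fin n → ℝ,
      ENNReal.ofReal (K * Real.exp (-(s * ‖(WithLp.toLp 2 y : En n)‖ ^ 2))) < ⊤ :=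
    Filter.Eventually.of_forall fun _ => ENNReal.ofReal_lt_top
  rw [integrable_withDensity_iff_integrable_smul' hmeas hlt] at h1
  rw [integral_withDensity_eq_integral_toReal_smul hmeas hlt] at h2
  have he : ∀ y : Fin n → ℝ, (ENNReal.ofReal
      (K * Real.exp (-(s * ‖(WithLp.toLp 2 y : En n)‖ ^ 2)))).toReal • 
        (u (x + WithLp.toLp 2 y) - u x) = K * ((fun y : En n => (u (x + y) - u x) * Real.exp (-(s * ‖y‖ ^ 2))) (WithLp.toLp 2 y)) := by
    intro y
    rw [ENNReal.toReal_ofReal (by positivity), smul_eq_mul]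
    ring
  simp_rw [he] at h1 h2
  have mp := PiLp.volume_preserving_toLp (Fin n)
  have me : MeasurableEmbedding (WithLp.toLp 2 : (Fin n → ℝ) → En n) :=
    (MeasurableEquiv.toLp 2 _).measurableEmbedding
  constructor
  · rw [← mp.integrable_comp_emb me]
    have := h1.const_mul K⁻¹
    refine this.congr (Filter.Eventually.of_forall fun y => ?_)
    simp only [Function.comp]
    field_simp
  · rw [← mp.integral_comp me]
    rw [integral_const_mul] at h2
    exact (mul_eq_zero.mp h2).resolve_left hKpos.ne'

lemma aux_scale {n : ℕ} (u : En n → ℝ) (h : GH u) (x : En n) (e s : ℝ) (hs : 0 < s) :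
    Integrable (fun y : En n => (u (x + e • y) - u x) * Real.exp (-(s * ‖y‖ ^ 2))) ∧
    ∫ y : En n, (u (x + e • y) - u x) * Real.exp (-(s * ‖y‖ ^ 2)) = 0 := by
  by_cases he : e = 0
  · simp [he]
  obtain ⟨h1, h2⟩ := h x (s / e ^ 2) (by positivity)
  have hf : (fun y : En n => (u (x + e • y) - u x) * Real.exp (-(s * ‖y‖ ^ 2))) =
      fun y => (fun y : En n => (u (x + y) - u x) * Real.exp (-(s / e ^ 2 * ‖y‖ ^ 2))) (e • y) := by
    funext y
    simp only [norm_smul, mul_pow, Real.norm_eq_abs, sq_abs]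
    congr 3
    field_simp
  rw [hf]
  refine ⟨(integrable_comp_smul_iff volume _ he).2 h1, ?_⟩
  rw [Measure.integral_comp_smul volume
    (fun y : En n => (u (x + y) - u x) * Real.exp (-(s / e ^ 2 * ‖y‖ ^ 2))) e, h2, smul_zero]

lemma aux_weier {n : ℕ} (w : En n → ℝ)
    (h : ∀ m : ℕ, Integrable (fun y : En n => w y * Real.exp (-(((m : ℝ) + 1) * ‖y‖ ^ 2))) ∧
      ∫ y : En n, w y * Real.exp (-(((m : ℝ) + 1) * ‖y‖ ^ 2)) = 0)
    (g : ℝ → ℝ) (hg : Continuous g) (hg1 : ∀ z, |g z| ≤ 1) :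
    Integrable (fun y : En n => w y * (Real.exp (-‖y‖ ^ 2) * g (Real.exp (-‖y‖ ^ 2)))) ∧
    ∫ y : En n, w y * (Real.exp (-‖y‖ ^ 2) * g (Real.exp (-‖y‖ ^ 2))) = 0 := by
  set W : En n → ℝ := fun y => w y * Real.exp (-‖y‖ ^ 2) with hW
  have hWi : Integrable W := by
    have := (h 0).1
    simpa using this
  have hpoly : ∀ p : Polynomial ℝ, Integrable (fun y => W y * p.eval (Real.exp (-‖y‖ ^ 2))) ∧
      ∫ y, W y * p.eval (Real.exp (-‖y‖ ^ 2)) = 0 := by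
    intro p
    induction p using Polynomial.induction_on' with
    | add p q hp hq =>
      simp only [Polynomial.eval_add, mul_add]
      refine ⟨hp.1.add hq.1, ?_⟩
      rw [integral_add hp.1 hq.1, hp.2, hq.2, add_zero]
    | monomial m a =>
      have : (fun y => W y * (Polynomial.monomial m a).eval (Real.exp (-‖y‖ ^ 2))) =
          fun y => a * (w y * Real.exp (-(((m : ℝ) + 1) * ‖y‖ ^ 2))) := by
        funext y
        have : Real.exp (-(((m : ℝ) + 1) * ‖y‖ ^ 2)) =
          Real.exp (-‖y‖ ^ 2) * Real.exp (-‖y‖ ^ 2) ^ m := by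
          rw [← Real.exp_nat_mul, ← Real.exp_add]
          congr 1; ring
        rw [Polynomial.eval_monomial, this, hW]
        ring
      rw [this]
      exact ⟨(h m).1.const_mul a, by rw [integral_const_mul, (h m).2, mul_zero]⟩
  have hgi : Integrable (fun y => W y * g (Real.exp (-‖y‖ ^ 2))) := by
    refine hWi.mono ?_ ?_
    · refine hWi.aestronglyMeasurable.mul (Continuous.aestronglyMeasurable ?_)
      fun_prop
    · refine Filter.Eventually.of_forall fun y => ?_
      rw [norm_mul]
      exact mul_le_of_le_one_right (norm_nonneg _) (hg1 _)
  have heq : (fun y : En n => w y * (Real.exp (-‖y‖ ^ 2) * g (Real.exp (-‖y‖ ^ 2)))) =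
      fun y => W y * g (Real.exp (-‖y‖ ^ 2)) := by
    funext y; rw [hW]; ring
  rw [heq]
  refine ⟨hgi, ?_⟩
  have key : ∀ d > 0, ‖∫ y, W y * g (Real.exp (-‖y‖ ^ 2))‖ ≤ d * ∫ y, ‖W y‖ := by
    intro d hd
    obtain ⟨p, hp⟩ := exists_polynomial_near_of_continuousOn 0 1 g hg.continuousOn d hd
    have h1 : ∫ y, W y * g (Real.exp (-‖y‖ ^ 2)) =
        ∫ y, (W y * g (Real.exp (-‖y‖ ^ 2)) - W y * p.eval (Real.exp (-‖y‖ ^ 2))) := by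
      rw [integral_sub hgi (hpoly p).1, (hpoly p).2, sub_zero]
    rw [h1, ← integral_const_mul]
    refine norm_integral_le_of_norm_le (hWi.norm.const_mul d) (Filter.Eventually.of_forall fun y => ?_)
    rw [← mul_sub, norm_mul, mul_comm]
    refine mul_le_mul_of_nonneg_right ?_ (norm_nonneg _)
    rw [Real.norm_eq_abs, abs_sub_comm]
    refine (hp _ ⟨(Real.exp_pos _).le, ?_⟩).le
    rw [Real.exp_le_one_iff]
    have := sq_nonneg ‖y‖
    linarith
  set I := ∫ y, ‖W y‖
  have hI : 0 ≤ I := integral_nonneg fun _ => norm_nonneg _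
  by_contra hne
  have hpos : 0 < ‖∫ y, W y * g (Real.exp (-‖y‖ ^ 2))‖ := norm_pos_iff.2 hne
  set N := ‖∫ y, W y * g (Real.exp (-‖y‖ ^ 2))‖
  have := key (N / (2 * (I + 1))) (by positivity)
  have h2 : N / (2 * (I + 1)) * I < N := by
    rw [div_mul_eq_mul_div, div_lt_iff₀ (by positivity)]
    nlinarith
  linarith

lemma aux_phi : ∃ g : ℝ → ℝ, ContDiff ℝ (⊤ : ℕ∞) g ∧ (∀ z, |g z| ≤ 1) ∧ (∀ z, 0 ≤ g z) ∧
    g (1 / 2) = 1 ∧ ∀ z, z ≤ 1 / 4 → g z = 0 := by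
  let b : ContDiffBump (1 / 2 : ℝ) := ⟨1 / 8, 1 / 4, by norm_num, by norm_num⟩
  refine ⟨b, b.contDiff, fun z => ?_, fun z => b.nonneg, ?_, fun z hz => ?_⟩
  · rw [abs_of_nonneg b.nonneg]; exact b.le_one
  · exact b.one_of_mem_closedBall (by simp [b])
  · refine b.zero_of_le_dist ?_
    rw [Real.dist_eq, abs_sub_comm]
    refine le_trans ?_ (le_abs_self _)
    show (1 / 4 : ℝ) ≤ _
    linarith

lemma aux_exists_phi {n : ℕ} (hn : 1 ≤ n) (u : En n → ℝ) (h : GH u) :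
    ∃ F : ℝ → ℝ, ContDiff ℝ (⊤ : ℕ∞) (fun y : En n => F ‖y‖) ∧
      HasCompactSupport (fun y : En n => F ‖y‖) ∧ (∀ y : En n, 0 ≤ F ‖y‖) ∧
      (∀ i : Fin n, ∃ r : ℝ, r ≠ 0 ∧ F ‖r • ee n i‖ ≠ 0) ∧
      ∀ (x : En n) (e : ℝ), ∫ y : En n, (u (x + e • y) - u x) * F ‖y‖ = 0 := by
  obtain ⟨g, hg, hg1, hg0, hgh, hgz⟩ := aux_phi
  refine ⟨fun r => Real.exp (-r ^ 2) * g (Real.exp (-r ^ 2)), ?_, ?_, ?_, ?_, ?_⟩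
  · have h1 : ContDiff ℝ (⊤ : ℕ∞) (fun y : En n => Real.exp (-‖y‖ ^ 2)) :=
      Real.contDiff_exp.comp (contDiff_norm_sq ℝ).neg
    exact h1.mul (hg.comp h1)
  · refine HasCompactSupport.intro (isCompact_closedBall (0 : En n) 2) fun y hy => ?_
    rw [mem_closedBall_zero_iff, not_le] at hy
    show Real.exp (-‖y‖ ^ 2) * g (Real.exp (-‖y‖ ^ 2)) = 0
    rw [hgz, mul_zero]
    have h1 := Real.add_one_le_exp (‖y‖ ^ 2)
    rw [Real.exp_neg, one_div]
    apply inv_anti₀ (by norm_num)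
    nlinarith
  · intro y
    exact mul_nonneg (Real.exp_pos _).le (hg0 _)
  · intro i
    have hl : 0 < Real.log 2 := Real.log_pos (by norm_num)
    refine ⟨√(Real.log 2), (Real.sqrt_pos.2 hl).ne', ?_⟩
    have : ‖√(Real.log 2) • ee n i‖ ^ 2 = Real.log 2 := by
      rw [norm_smul, ee, EuclideanSpace.norm_single, norm_one, mul_one, Real.norm_eq_abs, sq_abs,
        Real.sq_sqrt hl.le]
    simp only [this, Real.exp_neg, Real.exp_log (show (0 : ℝ) < 2 by norm_num)]
    rw [← one_div, hgh]
    norm_num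
  · intro x e
    exact (aux_weier (fun y => u (x + e • y) - u x)
      (fun m => aux_scale u h x e _ (by positivity)) g hg.continuous hg1).2

lemma aux_smooth {n : ℕ} (hn : 1 ≤ n) (u : En n → ℝ) (hu : Continuous u) (F : ℝ → ℝ)
    (h1 : ContDiff ℝ (⊤ : ℕ∞) (fun y : En n => F ‖y‖))
    (h2 : HasCompactSupport (fun y : En n => F ‖y‖)) (h3 : ∀ y : En n, 0 ≤ F ‖y‖)
    (h4 : ∀ i : Fin n, ∃ r : ℝ, r ≠ 0 ∧ F ‖r • ee n i‖ ≠ 0)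
    (h5 : ∀ (x : En n) (e : ℝ), ∫ y : En n, (u (x + e • y) - u x) * F ‖y‖ = 0) :
    ContDiff ℝ (⊤ : ℕ∞) u := by
  obtain ⟨r, -, hr⟩ := h4 ⟨0, hn⟩
  have hpos : 0 < ∫ y : En n, F ‖y‖ :=
    h1.continuous.integral_pos_of_hasCompactSupport_nonneg_nonzero h2 h3 hr
  have hconv := h2.contDiff_convolution_left (ContinuousLinearMap.mul ℝ ℝ) h1
    (hu.locallyIntegrable (μ := volume))
  have : u = fun x => (∫ y : En n, F ‖y‖)⁻¹ *
      (MeasureTheory.convolution (fun y : En n => F ‖y‖) u (ContinuousLinearMap.mul ℝ ℝ) volume) x := by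
    funext x
    rw [MeasureTheory.convolution_def]
    have h6 := h5 x (-1)
    have i1 : Integrable (fun y : En n => u (x + (-1 : ℝ) • y) * F ‖y‖) :=
      Continuous.integrable_of_hasCompactSupport
        ((hu.comp (by fun_prop)).mul h1.continuous) h2.mul_left
    have i2 : Integrable (fun y : En n => u x * F ‖y‖) :=
      (h1.continuous.integrable_of_hasCompactSupport h2).const_mul _
    simp_rw [sub_mul] at h6
    rw [integral_sub i1 i2, integral_const_mul, sub_eq_zero] at h6
    have h7 : ∫ t : En n, ((ContinuousLinearMap.mul ℝ ℝ) (F ‖t‖)) (u (x - t)) =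
        ∫ y : En n, u (x + (-1 : ℝ) • y) * F ‖y‖ := by
      refine integral_congr_ae (Filter.Eventually.of_forall fun y => ?_)
      simp [sub_eq_add_neg, mul_comm]
    rw [h7, h6]
    field_simp
  rw [this]
  exact contDiff_const.mul hconv

lemma aux_param {n : ℕ} (φ : En n → ℝ) (hφ : Continuous φ) (hφc : HasCompactSupport φ)
    (G G' : ℝ → En n → ℝ) (hG : Continuous (fun p : ℝ × En n => G p.1 p.2))
    (hG' : Continuous (fun p : ℝ × En n => G' p.1 p.2))
    (hd : ∀ e y, HasDerivAt (fun e => G e y) (G' e y) e)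
    (h0 : ∀ e, ∫ y, G e y * φ y = 0) : ∀ e, ∫ y, G' e y * φ y = 0 := by
  intro e
  obtain ⟨C, hC⟩ := ((isCompact_closedBall e 1).prod hφc).exists_bound_of_continuousOn
    hG'.continuousOn
  have hc : ∀ e, Continuous (fun y => G e y * φ y) := fun e =>
    (hG.comp (by fun_prop : Continuous fun y : En n => (e, y))).mul hφ
  have hc' : ∀ e, Continuous (fun y => G' e y * φ y) := fun e =>
    (hG'.comp (by fun_prop : Continuous fun y : En n => (e, y))).mul hφ
  have key := hasDerivAt_integral_of_dominated_loc_of_deriv_le (μ := volume)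
    (F := fun e y => G e y * φ y) (F' := fun e y => G' e y * φ y) (x₀ := e)
    (bound := fun y => C * ‖φ y‖) (Metric.closedBall_mem_nhds e one_pos)
    (Filter.Eventually.of_forall fun e => (hc e).aestronglyMeasurable)
    ((hc e).integrable_of_hasCompactSupport hφc.mul_left)
    (hc' e).aestronglyMeasurable
    (Filter.Eventually.of_forall fun y e' he' => by
      by_cases hy : φ y = 0
      · simp [hy]
      · rw [norm_mul]
        exact mul_le_mul_of_nonneg_right
          (hC (e', y) ⟨he', subset_tsupport _ hy⟩) (norm_nonneg _))
    ((hφ.integrable_of_hasCompactSupport hφc).norm.const_mul C)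
    (Filter.Eventually.of_forall fun y e' _ => (hd e' y).mul_const _)
  have h2 := key.2
  simp only [h0] at h2
  exact h2.unique (hasDerivAt_const e 0)

lemma aux_moment_off {n : ℕ} (F : ℝ → ℝ) (i j : Fin n) (hij : i ≠ j) :
    ∫ y : En n, (y i * y j) * F ‖y‖ = 0 := by
  classical
  let R : En n ≃ₗᵢ[ℝ] En n := LinearIsometryEquiv.piLpCongrRight 2
    (fun k => if k = i then LinearIsometryEquiv.neg ℝ else LinearIsometryEquiv.refl ℝ ℝ)
  have h := R.measurePreserving.integral_comp R.toHomeomorph.measurableEmbedding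
    (fun y : En n => (y i * y j) * F ‖y‖)
  have hi : ∀ y, R y i = - y i := fun y => by simp [R]
  have hj : ∀ y, R y j = y j := fun y => by simp [R, hij.symm]
  simp only [hi, hj, R.norm_map, neg_mul] at h
  rw [integral_neg] at h
  linarith

lemma aux_moment_diag {n : ℕ} (F : ℝ → ℝ) (i j : Fin n) :
    ∫ y : En n, (y i * y i) * F ‖y‖ = ∫ y : En n, (y j * y j) * F ‖y‖ := by
  classical
  let R : En n ≃ₗᵢ[ℝ] En n := LinearIsometryEquiv.piLpCongrLeft 2 ℝ ℝ (Equiv.swap i j)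
  have h := R.measurePreserving.integral_comp R.toHomeomorph.measurableEmbedding
    (fun y : En n => (y j * y j) * F ‖y‖)
  have hj : ∀ y, R y j = y i := fun y => by
    simp [R, LinearIsometryEquiv.piLpCongrLeft_apply, Equiv.piCongrLeft']
  simp only [hj, R.norm_map] at h
  exact h

lemma aux_flip {n : ℕ} (L : En n → (En n →L[ℝ] ℝ)) (L' : En n →L[ℝ] (En n →L[ℝ] ℝ)) (z y : En n)
    (h : HasFDerivAt L L' z) : HasFDerivAt (fun z => L z y) (L'.flip y) z := by
  have h2 := (ContinuousLinearMap.apply ℝ ℝ y).hasFDerivAt.comp z h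
  exact h2

lemma aux_harm {n : ℕ} (hn : 1 ≤ n) (u : En n → ℝ) (hu : ContDiff ℝ (⊤ : ℕ∞) u) (F : ℝ → ℝ)
    (h1 : Continuous (fun y : En n => F ‖y‖))
    (h2 : HasCompactSupport (fun y : En n => F ‖y‖)) (h3 : ∀ y : En n, 0 ≤ F ‖y‖)
    (h4 : ∀ i : Fin n, ∃ r : ℝ, r ≠ 0 ∧ F ‖r • ee n i‖ ≠ 0)
    (h5 : ∀ (x : En n) (e : ℝ), ∫ y : En n, (u (x + e • y) - u x) * F ‖y‖ = 0) (x : En n) :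
    laplacian u x = 0 := by
  have hD1 : ContDiff ℝ (⊤ : ℕ∞) (fderiv ℝ u) := hu.fderiv_right (by simp)
  have hD2 : ContDiff ℝ (⊤ : ℕ∞) (fderiv ℝ (fderiv ℝ u)) := hD1.fderiv_right (by simp)
  have hdu : ∀ z, HasFDerivAt u (fderiv ℝ u z) z := fun z =>
    (hu.differentiable (by simp) z).hasFDerivAt
  have hdu1 : ∀ z, HasFDerivAt (fderiv ℝ u) (fderiv ℝ (fderiv ℝ u) z) z := fun z =>
    (hD1.differentiable (by simp) z).hasFDerivAt
  have hline : ∀ (y : En n) (e : ℝ), HasDerivAt (fun e : ℝ => x + e • y) y e := fun y e => by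
    simpa using ((hasDerivAt_id e).smul_const y).const_add x
  have c0 := hu.continuous
  have c1 := hD1.continuous
  have c2 := hD2.continuous
  have s1 := aux_param (fun y : En n => F ‖y‖) h1 h2 (fun e y => u (x + e • y) - u x)
    (fun e y => fderiv ℝ u (x + e • y) y) (by fun_prop) (by fun_prop)
    (fun e y => ((hdu (x + e • y)).comp_hasDerivAt e (hline y e)).sub_const _) (h5 x)
  have s2 := aux_param (fun y : En n => F ‖y‖) h1 h2 (fun e y => fderiv ℝ u (x + e • y) y)
    (fun e y => fderiv ℝ (fderiv ℝ u) (x + e • y) y y) (by fun_prop) (by fun_prop)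
    (fun e y => by
      have h6 := (aux_flip (fderiv ℝ u) _ _ y (hdu1 (x + e • y))).comp_hasDerivAt e (hline y e)
      exact h6) s1 0
  simp only [zero_smul, add_zero] at s2
  set A := fderiv ℝ (fderiv ℝ u) x with hA
  have hexp : ∀ y : En n, A y y = ∑ i, ∑ j, A (ee n i) (ee n j) * (y i * y j) := by
    intro y
    have hy : y = ∑ i, y i • ee n i := by
      ext k
      simp [ee, Finset.sum_apply, Pi.single_apply]
    conv_lhs => rw [hy]
    simp only [map_sum, map_smul, FunLike.coe_sum, FunLike.coe_smul,
      Finset.sum_apply, Pi.smul_apply, smul_eq_mul, Finset.mul_sum]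
    rw [Finset.sum_comm]
    refine Finset.sum_congr rfl fun i _ => Finset.sum_congr rfl fun j _ => ?_
    ring
  have hint : ∀ i j : Fin n, Integrable (fun y : En n => A (ee n i) (ee n j) * (y i * y j) * F ‖y‖) :=
    fun i j => Continuous.integrable_of_hasCompactSupport
      (Continuous.mul (by fun_prop) h1) h2.mul_left
  simp_rw [hexp, Finset.sum_mul] at s2
  rw [integral_finsetSum _ (fun i _ => integrable_finsetSum _ fun j _ => hint i j)] at s2
  simp_rw [integral_finsetSum _ (fun j _ => hint _ j), mul_assoc, integral_const_mul, ← mul_assoc] at s2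
  let k : Fin n := ⟨0, hn⟩
  set m := ∫ y : En n, (y k * y k) * F ‖y‖ with hm
  have hmom : ∀ i : Fin n, ∑ j, A (ee n i) (ee n j) * ∫ y : En n, (y i * y j) * F ‖y‖ =
      A (ee n i) (ee n i) * m := by
    intro i
    rw [Finset.sum_eq_single i, aux_moment_diag F i k]
    · intro j _ hj
      rw [aux_moment_off F i j hj.symm, mul_zero]
    · simp
  simp_rw [hmom] at s2
  rw [← Finset.sum_mul] at s2
  have hmpos : 0 < m := by
    obtain ⟨r, hr0, hr⟩ := h4 k
    refine Continuous.integral_pos_of_hasCompactSupport_nonneg_nonzero (x := r • ee n k)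
      (Continuous.mul (by fun_prop) h1) h2.mul_left (fun y => mul_nonneg (mul_self_nonneg _) (h3 y)) ?_
    refine mul_ne_zero ?_ hr
    simp [ee, hr0]
  have hs := (mul_eq_zero.1 s2).resolve_right hmpos.ne'
  rw [laplacian, ← hs]
  refine Finset.sum_congr rfl fun i _ => ?_
  rw [(aux_flip _ _ _ (ee n i) (hdu1 x)).fderiv]
  rfl

/-- **Converse: the martingale property forces harmonicity.**
If `u : ℝⁿ → ℝ` is continuous, of polynomial growth, and for every `x ∈ ℝⁿ` there is a
Brownian motion `(B^x_t)` started at `x` such that `(u(B^x_t))` is a martingale with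
respect to its natural filtration, then `u` is infinitely differentiable and harmonic. -/
theorem martingale_implies_harmonic {n : ℕ} (hn : 1 ≤ n)
    (u : En n → ℝ) (hu : Continuous u)
    (hgrowth : ∃ C > 0, ∃ k : ℕ, ∀ y, |u y| ≤ C * (1 + ‖y‖ ^ k))
    (hmart : ∀ x : En n, ∃ (Ω : Type) (_ : MeasurableSpace Ω)
      (P : MeasureTheory.Measure Ω) (_ : MeasureTheory.IsProbabilityMeasure P)
      (B : ℝ≥0 → Ω → En n) (hB : IsBrownianMotion P x B),
      MeasureTheory.Martingale (fun t ω => u (B t ω))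
        (MeasureTheory.Filtration.natural B hB.stronglyMeasurable) P) :
    ContDiff ℝ (⊤ : ℕ∞) u ∧ ∀ y, laplacian u y = 0 := by
  have hGH : GH u := aux_GH u fun x t => by
    obtain ⟨Ω, _, P, _, B, hB, hM⟩ := hmart x
    exact aux_mart u hu x t P B hB hM
  obtain ⟨F, h1, h2, h3, h4, h5⟩ := aux_exists_phi hn u hGH
  have hs := aux_smooth hn u hu F h1 h2 h3 h4 h5
  exact ⟨hs, fun y => aux_harm hn u hs F h1.continuous h2 h3 h4 h5 y⟩
end

section
/- Let u : ℝⁿ → ℝ be continuous and of polynomial growth (there exist C > 0 and k ∈ ℕ with |u(y)| ≤ C(1 + |y|^k) for all y). If for every x ∈ ℝⁿ and every t > 0 one has ∫_{ℝⁿ} u(y) dN(x, t·Id)(y) = u(x), then u is infinitely differentiable and harmonic on ℝⁿ, i.e. Δu(y) = Σᵢ ∂²u/∂yᵢ²(y) = 0 for all y ∈ ℝⁿ. -/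
open MeasureTheory ProbabilityTheory Finset
open scoped NNReal

open WithLp Filter Topology in
lemma gaussN_eq {n : ℕ} (x : En n) (s : ℝ) (hs : 0 ≤ s^2) :
    gaussN x ⟨s^2, hs⟩ = (stdGaussian (En n)).map (fun z => x + s • z) := by
  unfold gaussN
  rw [← map_pi_eq_stdGaussian, Measure.map_map (f := toLp 2) (by fun_prop) (by fun_prop)]
  have h : ∀ i : Fin n, gaussianReal (x i) ⟨s^2, hs⟩
      = (gaussianReal 0 1).map (fun z => x i + s * z) := by
    intro i
    have : (fun z => x i + s * z) = (fun z => x i + z) ∘ (fun z => s * z) := rfl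
    rw [this, ← Measure.map_map (by fun_prop) (by fun_prop), gaussianReal_map_const_mul,
      gaussianReal_map_const_add]
    simp
    rfl
  simp_rw [h]
  rw [← Measure.pi_map_pi (fun i => by fun_prop), Measure.map_map (by fun_prop) (by fun_prop)]
  congr 1

lemma gaussianReal_shift (m : ℝ) : gaussianReal m 1
    = (gaussianReal 0 1).withDensity (fun y => ENNReal.ofReal (Real.exp (m * y - m^2/2))) := by
  rw [gaussianReal_of_var_ne_zero _ one_ne_zero, gaussianReal_of_var_ne_zero _ one_ne_zero,
    ← withDensity_mul _ (by fun_prop) (by fun_prop)]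
  congr 1
  ext y
  simp only [gaussianPDF, Pi.mul_apply]
  rw [← ENNReal.ofReal_mul (gaussianPDFReal_nonneg _ _ _)]
  congr 1
  simp only [gaussianPDFReal]
  rw [mul_assoc _ (Real.exp _) (Real.exp _), ← Real.exp_add]
  congr 2
  simp
  ring

lemma pi_withDensity' {n : ℕ} (μ : Fin n → Measure ℝ) [∀ i, IsProbabilityMeasure (μ i)]
    (f : Fin n → ℝ → ENNReal) (hf : ∀ i, Measurable (f i))
    [∀ i, SigmaFinite ((μ i).withDensity (f i))] :
    Measure.pi (fun i => (μ i).withDensity (f i))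
      = (Measure.pi μ).withDensity (fun y => ∏ i, f i (y i)) := by
  apply Measure.pi_eq
  intro s hs
  have hms : MeasurableSet (Set.univ.pi s) := MeasurableSet.univ_pi hs
  rw [withDensity_apply _ hms, ← lintegral_indicator hms]
  have h1 : ∀ y : Fin n → ℝ, (Set.univ.pi s).indicator (fun y => ∏ i, f i (y i)) y
      = ∏ i, (s i).indicator (f i) (y i) := by
    intro y
    by_cases hy : y ∈ Set.univ.pi s
    · rw [Set.indicator_of_mem hy]
      refine Finset.prod_congr rfl fun i _ => ?_
      rw [Set.indicator_of_mem (hy i (Set.mem_univ _))]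
    · rw [Set.indicator_of_notMem hy]
      simp only [Set.mem_univ_pi, not_forall] at hy
      obtain ⟨i, hi⟩ := hy
      exact (Finset.prod_eq_zero (Finset.mem_univ i) (Set.indicator_of_notMem hi _)).symm
  simp_rw [h1]
  have hm : ∀ i, Measurable ((s i).indicator (f i)) := fun i => (hf i).indicator (hs i)
  have hi := iIndepFun_pi (μ := μ) (X := fun i => (s i).indicator (f i)) 
    (fun i => (hm i).aemeasurable)
  have := lintegral_prod_eq_prod_lintegral_of_indepFun (μ := Measure.pi μ) Finset.univ
    (fun i (y : Fin n → ℝ) => (s i).indicator (f i) (y i)) hi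
    (fun i => (hm i).comp (measurable_pi_apply i))
  rw [this]
  refine Finset.prod_congr rfl fun i _ => ?_
  have h2 := (measurePreserving_eval μ i).lintegral_comp (hm i)
  simp only [Function.eval] at h2
  rw [h2, lintegral_indicator (hs i), withDensity_apply _ (hs i)]

lemma integral_gaussN_one {n : ℕ} (x : En n) (u : En n → ℝ) (hu : Continuous u) :
    ∫ y, u y ∂(gaussN x 1)
      = Real.exp (-‖x‖^2/2) * ∫ y, Real.exp (inner ℝ x y) • u y ∂(stdGaussian (En n)) := by
  rw [← map_pi_eq_stdGaussian, gaussN]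
  have hp : ∀ i, SigmaFinite ((gaussianReal 0 1).withDensity
      (fun y => ENNReal.ofReal (Real.exp (x i * y - x i^2/2)))) := by
    intro i; rw [← gaussianReal_shift]; infer_instance
  rw [integral_map (by fun_prop) (by fun_prop), integral_map (by fun_prop) (by fun_prop)]
  simp_rw [gaussianReal_shift (x _)]
  rw [pi_withDensity' _ _ (fun i => by fun_prop), integral_withDensity_eq_integral_toReal_smul
    (by fun_prop), ← integral_const_mul]
  · congr 1
    ext y
    rw [ENNReal.toReal_prod]
    simp only [ENNReal.toReal_ofReal (Real.exp_pos _).le, smul_eq_mul]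
    rw [← Real.exp_sum, ← mul_assoc, ← Real.exp_add]
    congr 2
    rw [EuclideanSpace.real_norm_sq_eq, Finset.sum_sub_distrib]
    simp [PiLp.inner_apply, ← Finset.sum_div, mul_comm]
    ring
  · refine Filter.Eventually.of_forall fun y => ?_
    exact ENNReal.prod_lt_top (fun i _ => ENNReal.ofReal_lt_top)

lemma integrable_exp_norm {n : ℕ} (a : ℝ) :
    Integrable (fun y => Real.exp (a * ‖y‖)) (stdGaussian (En n)) := by
  obtain ⟨C, hC, h⟩ := IsGaussian.exists_integrable_exp_sq (stdGaussian (En n))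
  refine (h.const_mul (Real.exp (a^2/(4*C)))).mono' (by fun_prop) ?_
  refine Filter.Eventually.of_forall fun y => ?_
  rw [Real.norm_eq_abs, abs_of_pos (Real.exp_pos _), ← Real.exp_add]
  apply Real.exp_le_exp.2
  have : a^2/(4*C) + C * ‖y‖^2 - a * ‖y‖ = (a - 2*C*‖y‖)^2/(4*C) := by
    field_simp; ring
  have : 0 ≤ (a - 2*C*‖y‖)^2/(4*C) := by positivity
  linarith

lemma one_add_pow_le (k : ℕ) (r : ℝ) (hr : 0 ≤ r) : 1 + r^k ≤ (1 + k.factorial) * Real.exp r := by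
  have h1 := Real.pow_div_factorial_le_exp r hr k
  have h2 : 1 ≤ Real.exp r := Real.one_le_exp hr
  rw [div_le_iff₀ (by positivity)] at h1
  nlinarith

lemma integrable_of_exp {n : ℕ} {F : Type} [NormedAddCommGroup F]
    (f : En n → F) (hf : Continuous f) (C a : ℝ) (h : ∀ y, ‖f y‖ ≤ C * Real.exp (a * ‖y‖)) :
    Integrable f (stdGaussian (En n)) := by
  refine ((integrable_exp_norm a).const_mul C).mono' hf.aestronglyMeasurable ?_
  exact Filter.Eventually.of_forall h

lemma contDiff_exp_integral {n : ℕ} (m : ℕ) : ∀ {F : Type} [NormedAddCommGroup F] [NormedSpace ℝ F]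
    [CompleteSpace F]
    (f : En n → F) (_ : Continuous f) (C a : ℝ) (_ : 0 ≤ C) (_ : ∀ y, ‖f y‖ ≤ C * Real.exp (a * ‖y‖)),
    ContDiff ℝ m (fun x => ∫ y, Real.exp (inner ℝ x y) • f y ∂(stdGaussian (En n))) := by
  have key : ∀ {F : Type} [NormedAddCommGroup F] [NormedSpace ℝ F] [CompleteSpace F]
    (f : En n → F) (_ : Continuous f) (C a : ℝ) (_ : 0 ≤ C) (_ : ∀ y, ‖f y‖ ≤ C * Real.exp (a * ‖y‖))
    (x : En n), HasFDerivAt (fun x => ∫ y, Real.exp (inner ℝ x y) • f y ∂(stdGaussian (En n)))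
      (∫ y, Real.exp (inner ℝ x y) • (innerSL ℝ y).smulRight (f y) ∂(stdGaussian (En n))) x := by
    intro F _ _ _ f hf C a hC h x
    have hb : ∀ z ∈ Metric.ball x 1, ∀ y : En n, Real.exp (inner ℝ z y) ≤ Real.exp ((‖x‖+1) * ‖y‖) := by
      intro z hz y
      apply Real.exp_le_exp.2
      refine (real_inner_le_norm z y).trans ?_
      gcongr
      have := norm_sub_norm_le z x
      rw [mem_ball_iff_norm] at hz
      linarith
    have hx : x ∈ Metric.ball x 1 := Metric.mem_ball_self one_pos
    have hcont : Continuous fun y : En n => (innerSL ℝ y).smulRight (f y) := by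
      have : Continuous fun y : En n => 
        (ContinuousLinearMap.smulRightL ℝ (En n) F (innerSL ℝ y)) (f y) := by fun_prop
      exact this
    refine hasFDerivAt_integral_of_dominated_of_fderiv_le (𝕜 := ℝ)
      (F' := fun x y => Real.exp (inner ℝ x y) • (innerSL ℝ y).smulRight (f y))
      (bound := fun y => C * Real.exp ((‖x‖+1 + a + 1) * ‖y‖))
      (Metric.ball_mem_nhds x one_pos) ?_ ?_ ?_ ?_ ?_ ?_
    · refine Filter.Eventually.of_forall fun z => ?_
      exact Continuous.aestronglyMeasurable (by fun_prop)
    · refine integrable_of_exp _ (by fun_prop) C (‖x‖+1+a) fun y => ?_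
      rw [norm_smul, Real.norm_eq_abs, abs_of_pos (Real.exp_pos _), add_mul (‖x‖+1), Real.exp_add]
      calc _ ≤ Real.exp ((‖x‖+1) * ‖y‖) * (C * Real.exp (a * ‖y‖)) := by
            gcongr
            · exact Real.exp_le_exp.1 (hb x hx y)
            · exact h y
        _ = _ := by ring
    · exact Continuous.aestronglyMeasurable (by fun_prop)
    · refine Filter.Eventually.of_forall fun y z hz => ?_
      rw [norm_smul, Real.norm_eq_abs, abs_of_pos (Real.exp_pos _), 
        ContinuousLinearMap.norm_smulRight_apply, innerSL_apply_norm, add_mul (‖x‖+1+a),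
        add_mul (‖x‖+1), Real.exp_add, Real.exp_add]
      have hy : ‖y‖ ≤ Real.exp (1 * ‖y‖) := by
        have := Real.add_one_le_exp ‖y‖
        rw [one_mul]; linarith
      calc _ ≤ Real.exp ((‖x‖+1) * ‖y‖) * (Real.exp (1 * ‖y‖) * (C * Real.exp (a * ‖y‖))) := by
            gcongr
            · exact Real.exp_le_exp.1 (hb z hz y)
            · exact h y
        _ = _ := by ring
    · exact (integrable_exp_norm _).const_mul _
    · refine Filter.Eventually.of_forall fun y z hz => ?_
      have h1 : HasFDerivAt (fun z : En n => inner ℝ z y) (innerSL ℝ y) z := by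
        have := (innerSL ℝ y).hasFDerivAt (x := z)
        refine this.congr_of_eventuallyEq (Filter.Eventually.of_forall fun w => ?_)
        simp [real_inner_comm]
      have h2 := h1.exp.smul_const (f y)
      convert h2 using 1
      ext w
      simp [mul_smul]
  induction m with
  | zero => 
    intro F _ _ _ f hf C a hC h
    exact contDiff_zero.2 (continuous_iff_continuousAt.2 fun x => (key f hf C a hC h x).continuousAt)
  | succ m ih =>
    intro F _ _ _ f hf C a hC h
    have hcont : Continuous fun y : En n => (innerSL ℝ y).smulRight (f y) := by
      have : Continuous fun y : En n => 
        (ContinuousLinearMap.smulRightL ℝ (En n) F (innerSL ℝ y)) (f y) := by fun_prop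
      exact this
    refine contDiff_succ_iff_hasFDerivAt.2 ⟨_, ih _ hcont C (a+1) hC ?_, key f hf C a hC h⟩
    intro y
    rw [ContinuousLinearMap.norm_smulRight_apply, innerSL_apply_norm, add_mul, Real.exp_add]
    have hy : ‖y‖ ≤ Real.exp (1 * ‖y‖) := by
      have := Real.add_one_le_exp ‖y‖
      rw [one_mul]; linarith
    calc _ ≤ Real.exp (1 * ‖y‖) * (C * Real.exp (a * ‖y‖)) := by
            gcongr
            exact h y
        _ = _ := by ring

lemma integral_coord_mul {n : ℕ} (v w : En n) :
    ∫ z, inner ℝ v z * inner ℝ w z ∂(stdGaussian (En n)) = inner ℝ v w := by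
  have h := covarianceBilin_apply (μ := stdGaussian (En n)) IsGaussian.memLp_two_id v w
  rw [covarianceBilin_stdGaussian] at h
  rw [innerSL_apply_apply] at h
  simpa using h.symm

lemma integral_quad {n : ℕ} (H : En n →L[ℝ] En n →L[ℝ] ℝ) :
    ∫ z, H z z ∂(stdGaussian (En n)) = ∑ i, H (ee n i) (ee n i) := by
  have hz : ∀ z : En n, z = ∑ i, (inner ℝ (ee n i) z) • ee n i := by
    intro z
    have := (EuclideanSpace.basisFun (Fin n) ℝ).sum_repr' z
    simpa [ee] using this.symm
  have h1 : ∀ z : En n, H z z = ∑ i, ∑ j, (inner ℝ (ee n i) z * inner ℝ (ee n j) z) * H (ee n i) (ee n j) := by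
    intro z
    conv_lhs => rw [hz z]
    simp only [map_sum, map_smul, _root_.sum_apply, _root_.smul_apply, smul_eq_mul, Finset.mul_sum]
    rw [Finset.sum_comm]
    refine Finset.sum_congr rfl fun i _ => Finset.sum_congr rfl fun j _ => ?_
    ring
  have hint : ∀ i j, Integrable (fun z : En n => (inner ℝ (ee n i) z * inner ℝ (ee n j) z) * H (ee n i) (ee n j)) (stdGaussian (En n)) := by
    intro i j
    refine Integrable.mul_const ?_ _
    refine integrable_of_exp _ (by fun_prop) (‖ee n i‖ * ‖ee n j‖) 2 fun z => ?_
    rw [norm_mul, two_mul, Real.exp_add]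
    have hy : ‖z‖ ≤ Real.exp ‖z‖ := by
      have := Real.add_one_le_exp ‖z‖
      linarith
    calc _ ≤ (‖ee n i‖ * ‖z‖) * (‖ee n j‖ * ‖z‖) := by
          gcongr <;> exact norm_inner_le_norm _ _
      _ ≤ (‖ee n i‖ * Real.exp ‖z‖) * (‖ee n j‖ * Real.exp ‖z‖) := by gcongr
      _ = _ := by ring
  rw [integral_congr_ae (Filter.Eventually.of_forall h1)]
  rw [integral_finsetSum _ (fun i _ => integrable_finsetSum _ fun j _ => hint i j)]
  refine Finset.sum_congr rfl fun i _ => ?_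
  rw [integral_finsetSum _ fun j _ => hint i j]
  simp_rw [integral_mul_const, integral_coord_mul]
  rw [Finset.sum_eq_single i]
  · simp [ee]
  · intro j _ hj
    simp [ee, EuclideanSpace.inner_single_left, hj.symm]
  · simp

open Filter Topology in
lemma lap_zero {n : ℕ} (u : En n → ℝ) (hu : ContDiff ℝ 2 u) (C : ℝ) (hC : 0 ≤ C)
    (hg : ∀ y, |u y| ≤ C * Real.exp ‖y‖) (x : En n)
    (hm : ∀ s : ℝ, 0 < s → ∫ z, u (x + s • z) ∂(stdGaussian (En n)) = u x) :
    ∑ i, fderiv ℝ (fderiv ℝ u) x (ee n i) (ee n i) = 0 := by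
  set L := fderiv ℝ u x with hL
  set H := fderiv ℝ (fderiv ℝ u) x with hH
  have hd : ∀ y, HasFDerivAt u (fderiv ℝ u y) y := fun y =>
    (hu.differentiable (by norm_num) y).hasFDerivAt
  have hu1 : ContDiff ℝ 1 (fderiv ℝ u) := hu.fderiv_right (by norm_num)
  have hd2 : HasFDerivAt (fderiv ℝ u) H x := (hu1.differentiable (by norm_num) x).hasFDerivAt
  have hsym : ∀ v w, H v w = H w v := second_derivative_symmetric hd hd2
  set ψ : En n → ℝ := fun h => u (x + h) - u x - L h - 1/2 * H h h with hψ
  have hucont : Continuous u := hu.continuous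
  have hψc : Continuous ψ := by
    have : Continuous fun h => H h h := by fun_prop
    fun_prop
  have hψ0 : ψ 0 = 0 := by simp [hψ]
  have hψd : ∀ h, HasFDerivAt ψ (fderiv ℝ u (x + h) - L - H h) h := by
    intro h
    have h1 : HasFDerivAt (fun h => u (x + h)) (fderiv ℝ u (x + h)) h := by
      have := (hd (x + h)).comp h ((hasFDerivAt_id h).const_add x)
      rw [ContinuousLinearMap.comp_id] at this
      exact this
    have h2 : HasFDerivAt (fun h => H h h) ((H h).comp (ContinuousLinearMap.id ℝ (En n)) + H.flip h) h := 
      H.hasFDerivAt.clm_apply (hasFDerivAt_id h)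
    have h3 := ((h1.sub_const (u x)).sub L.hasFDerivAt).sub (h2.const_mul (1/2))
    refine HasFDerivAt.congr_fderiv h3 ?_
    ext w
    have := hsym w h
    simp
    linarith
  have ho : ψ =o[𝓝 0] fun h => ‖h‖^2 := by
    have h1 : (fun h => fderiv ℝ u (x + h) - L - H h) =o[𝓝[Set.univ] 0] fun h : En n => ‖h - 0‖^1 := by
      rw [nhdsWithin_univ]
      have := hasFDerivAt_iff_isLittleO_nhds_zero.1 hd2
      simpa using this.norm_right
    have := convex_univ.isLittleO_pow_succ (f := ψ) (Set.mem_univ (0 : En n))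
      (fun h _ => (hψd h).hasFDerivWithinAt) h1
    simpa [hψ0, nhdsWithin_univ] using this
  have he : ∀ r : ℝ, r ≤ Real.exp r := fun r => by
    have := Real.add_one_le_exp r
    linarith
  have he2 : ∀ r : ℝ, 0 ≤ r → r^2 ≤ 2 * Real.exp r := fun r hr => by
    have := Real.pow_div_factorial_le_exp r hr 2
    norm_num [Nat.factorial] at this
    linarith
  have hux : ∀ h, |u (x + h)| ≤ C * Real.exp ‖x‖ * Real.exp ‖h‖ := fun h => by
    refine (hg _).trans ?_
    rw [mul_assoc, ← Real.exp_add]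
    gcongr
    exact norm_add_le x h
  have hHb : ∀ h, |H h h| ≤ ‖H‖ * ‖h‖^2 := fun h => by
    have := H.le_opNorm₂ h h
    rw [Real.norm_eq_abs] at this
    linarith
  set A := C * Real.exp ‖x‖ + |u x| + ‖L‖ + ‖H‖ with hA
  have hA0 : 0 ≤ A := by positivity
  have hfar : ∀ h, |ψ h| ≤ A * Real.exp ‖h‖ := by
    intro h
    have e1 := hux h
    have e2 : |u x| ≤ |u x| * Real.exp ‖h‖ := le_mul_of_one_le_right (abs_nonneg _) (Real.one_le_exp (norm_nonneg _))
    have e3 : |L h| ≤ ‖L‖ * Real.exp ‖h‖ := (L.le_opNorm h).trans (by gcongr; exact he _)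
    have e4 : |1/2 * H h h| ≤ ‖H‖ * Real.exp ‖h‖ := by
      rw [abs_mul, abs_of_pos (by norm_num : (0:ℝ) < 1/2)]
      have := mul_le_mul_of_nonneg_left (he2 ‖h‖ (norm_nonneg _)) (norm_nonneg H)
      linarith [hHb h]
    have t1 := abs_sub (u (x+h) - u x - L h) (1/2 * H h h)
    have t2 := abs_sub (u (x+h) - u x) (L h)
    have t3 := abs_sub (u (x+h)) (u x)
    simp only [hψ, hA]
    linarith
  obtain ⟨K, hK0, hK⟩ : ∃ K, 0 ≤ K ∧ ∀ h, |ψ h| ≤ K * ‖h‖^2 * Real.exp ‖h‖ := by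
    have h1 := ho.bound one_pos
    obtain ⟨δ, hδ, h2⟩ := Metric.eventually_nhds_iff.1 h1
    refine ⟨1 + A/δ^2, by positivity, fun h => ?_⟩
    by_cases hh : ‖h‖ < δ
    · have h3 := h2 (y := h) (by simpa using hh)
      simp only [norm_pow, norm_norm, one_mul] at h3
      rw [← Real.norm_eq_abs]
      refine h3.trans ?_
      have : 1 ≤ Real.exp ‖h‖ := Real.one_le_exp (norm_nonneg _)
      have h5 : 0 ≤ A/δ^2 := by positivity
      calc ‖h‖^2 = 1 * ‖h‖^2 * 1 := by ring
        _ ≤ _ := by gcongr; linarith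
    · push Not at hh
      refine (hfar h).trans ?_
      gcongr
      have : A = A/δ^2 * δ^2 := by field_simp
      have h5 : δ^2 ≤ ‖h‖^2 := by gcongr
      have h6 : A/δ^2 * δ^2 ≤ A/δ^2 * ‖h‖^2 := by gcongr
      nlinarith [sq_nonneg ‖h‖]
  have hint1 : ∀ s : ℝ, 0 < s → Integrable (fun z => u (x + s • z)) (stdGaussian (En n)) := by
    intro s hs
    refine integrable_of_exp _ (by fun_prop) (C * Real.exp ‖x‖) s fun z => ?_
    have := hux (s • z)
    rwa [norm_smul, Real.norm_eq_abs, abs_of_pos hs] at this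
  have hintL : Integrable (fun z => L z) (stdGaussian (En n)) := 
    L.integrable_comp IsGaussian.integrable_id
  have hintH : Integrable (fun z => H z z) (stdGaussian (En n)) := by
    have hc : Continuous fun h => H h h := by fun_prop
    refine integrable_of_exp _ hc (‖H‖ * 2) 1 fun z => ?_
    refine (hHb z).trans ?_
    rw [mul_assoc, one_mul]
    gcongr
    exact he2 _ (norm_nonneg _)
  have hI : ∀ s : ℝ, 0 < s → ∫ z, ψ (s • z) / s^2 ∂(stdGaussian (En n))
      = -(1/2) * ∫ z, H z z ∂(stdGaussian (En n)) := by
    intro s hs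
    have e : ∀ z, ψ (s • z) / s^2 = ((u (x + s • z) - u x) - s * L z - s^2/2 * H z z) / s^2 := by
      intro z
      simp only [hψ, map_smul, _root_.smul_apply, smul_eq_mul]
      ring
    simp_rw [e]
    have i1 : Integrable (fun z => u (x + s • z) - u x) (stdGaussian (En n)) :=
      (hint1 s hs).sub (integrable_const _)
    have i2 : Integrable (fun z => u (x + s • z) - u x - s * L z) (stdGaussian (En n)) :=
      i1.sub (hintL.const_mul s)
    rw [integral_div, integral_sub i2
      (hintH.const_mul _), integral_sub i1 (hintL.const_mul s),
      integral_sub (hint1 s hs) (integrable_const _), hm s hs, integral_const_mul, integral_const_mul,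
      integral_strongDual_stdGaussian]
    simp
    field_simp
  have hlim : Tendsto (fun s : ℝ => ∫ z, ψ (s • z) / s^2 ∂(stdGaussian (En n))) (𝓝[>] 0)
      (𝓝 (∫ _, (0:ℝ) ∂(stdGaussian (En n)))) := by
    refine tendsto_integral_filter_of_dominated_convergence
      (fun z => K * 2 * Real.exp (2 * ‖z‖)) ?_ ?_ ((integrable_exp_norm 2).const_mul _) ?_
    · refine Eventually.of_forall fun s => Continuous.aestronglyMeasurable (by fun_prop)
    · filter_upwards [Ioc_mem_nhdsGT (one_pos : (0:ℝ) < 1)] with s hs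
      refine Eventually.of_forall fun z => ?_
      have hs0 : 0 < s := hs.1
      rw [norm_div, Real.norm_eq_abs, Real.norm_eq_abs, abs_of_pos (by positivity : 0 < s^2),
        div_le_iff₀ (by positivity)]
      refine (hK _).trans ?_
      rw [norm_smul, Real.norm_eq_abs, abs_of_pos hs0, two_mul, Real.exp_add]
      have h1 : s * ‖z‖ ≤ ‖z‖ := mul_le_of_le_one_left (norm_nonneg _) hs.2
      have h2 := he2 ‖z‖ (norm_nonneg _)
      calc K * (s * ‖z‖)^2 * Real.exp (s * ‖z‖) = K * s^2 * ‖z‖^2 * Real.exp (s * ‖z‖) := by ring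
        _ ≤ K * s^2 * (2 * Real.exp ‖z‖) * Real.exp ‖z‖ := by gcongr
        _ = _ := by ring
    · refine Eventually.of_forall fun z => ?_
      have ht : Tendsto (fun s : ℝ => s • z) (𝓝[>] 0) (𝓝 0) := by
        have : Tendsto (fun s : ℝ => s • z) (𝓝 0) (𝓝 ((0:ℝ) • z)) := 
          (continuous_id.smul continuous_const).tendsto 0
        rw [zero_smul] at this
        exact this.mono_left nhdsWithin_le_nhds
      have h1 := ho.comp_tendsto ht
      have h2 : ((fun h : En n => ‖h‖^2) ∘ fun s : ℝ => s • z) =O[𝓝[>] 0] fun s : ℝ => s^2 := by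
        refine Asymptotics.IsBigO.of_bound (‖z‖^2) (Eventually.of_forall fun s => ?_)
        simp [norm_smul, mul_pow, mul_comm]
      exact (h1.trans_isBigO h2).tendsto_div_nhds_zero
  have hconst : Tendsto (fun s : ℝ => ∫ z, ψ (s • z) / s^2 ∂(stdGaussian (En n))) (𝓝[>] 0)
      (𝓝 (-(1/2) * ∫ z, H z z ∂(stdGaussian (En n)))) := by
    refine tendsto_const_nhds.congr' ?_
    filter_upwards [self_mem_nhdsWithin] with s hs
    exact (hI s hs).symm
  have := tendsto_nhds_unique hlim hconst
  rw [integral_quad] at this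
  simp at this
  linarith

/-- **Converse of the Gaussian mean value property.**
If `u : ℝⁿ → ℝ` is continuous, of polynomial growth, and `∫ u dN(x, t·Id) = u(x)` for
every `x ∈ ℝⁿ` and `t > 0`, then `u` is infinitely differentiable and harmonic. -/
theorem gaussian_mean_value_implies_harmonic {n : ℕ} (hn : 1 ≤ n)
    (u : En n → ℝ) (hu : Continuous u)
    (hgrowth : ∃ C > 0, ∃ k : ℕ, ∀ y, |u y| ≤ C * (1 + ‖y‖ ^ k))
    (hmean : ∀ (x : En n) (t : ℝ) (ht : 0 < t), ∫ y, u y ∂(gaussN x ⟨t, ht.le⟩) = u x) :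
    ContDiff ℝ (⊤ : ℕ∞) u ∧ ∀ y, laplacian u y = 0 := by
  obtain ⟨C, hC, k, hk⟩ := hgrowth
  set C' := C * (1 + k.factorial) with hC'
  have hC'0 : 0 ≤ C' := by positivity
  have hg : ∀ y, |u y| ≤ C' * Real.exp ‖y‖ := by
    intro y
    refine (hk y).trans ?_
    rw [hC', mul_assoc]
    gcongr
    exact one_add_pow_le k _ (norm_nonneg _)
  have hrep : u = fun x => Real.exp (-‖x‖^2/2) *
      ∫ y, Real.exp (inner ℝ x y) • u y ∂(stdGaussian (En n)) := by
    ext x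
    rw [← integral_gaussN_one x u hu]
    exact (hmean x 1 one_pos).symm
  have hsm : ContDiff ℝ (⊤ : ℕ∞) u := by
    rw [contDiff_infty]
    intro m
    have h1 := contDiff_exp_integral m u hu C' 1 hC'0 (by simpa using hg)
    have h2 : ContDiff ℝ m fun x : En n => Real.exp (-‖x‖^2/2) :=
      ((contDiff_norm_sq ℝ).neg.div_const 2).exp
    rw [hrep]
    exact h2.mul h1
  refine ⟨hsm, fun x => ?_⟩
  have hu2 : ContDiff ℝ 2 u := contDiff_infty.1 hsm 2
  rw [← lap_zero u hu2 C' hC'0 hg x ?_]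
  · unfold laplacian
    refine Finset.sum_congr rfl fun i _ => ?_
    have hd2 : DifferentiableAt ℝ (fderiv ℝ u) x :=
      (hu2.fderiv_right (m := 1) (by norm_num)).differentiable (by norm_num) x
    rw [fderiv_clm_apply hd2 (differentiableAt_const _)]
    simp
  · intro s hs
    have h := hmean x (s^2) (by positivity)
    rw [gaussN_eq, integral_map (by fun_prop) (by fun_prop)] at h
    exact h
end
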